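/- In the Golub–Kahan bidiagonalization setup (rectangular case m > n), for every k with 1 ≤ k ≤ n−1, the smallest singular value θ_k^{(k)} of B_k and the smallest singular value θ̄_k^{(k)} of B̄_k satisfy σ_n < θ_k^{(k)} < σ_k and 0 < θ̄_k^{(k)} < θ_k^{(k)} < σ_k. -/

import Mathlib

open Matrix

/-- Spectral norm (largest singular value) of a real matrix. -/
noncomputable def specNorm {a b : ℕ} (M : Matrix (Fin a) (Fin b) ℝ) : ℝ :=
  ‖LinearMap.toContinuousLinearMap (Matrix.toEuclideanLin M)‖

/-- The `j`-th largest singular value of a real matrix (`j ≥ 1`), characterized via the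
Eckart–Young theorem as the minimal spectral-norm distance to matrices of rank `< j`;
it is `0` when `j` exceeds the smaller dimension. -/
noncomputable def singVal {a b : ℕ} (M : Matrix (Fin a) (Fin b) ℝ) (j : ℕ) : ℝ :=
  sInf {r : ℝ | ∃ D : Matrix (Fin a) (Fin b) ℝ, D.rank < j ∧ r = specNorm (M - D)}

/-- The matrix of the first `k` columns of `M`. -/
def colSub {a b : ℕ} (M : Matrix (Fin a) (Fin b) ℝ) (k : ℕ) (hk : k ≤ b) :
    Matrix (Fin a) (Fin k) ℝ :=
  M.submatrix id fun j => ⟨j.1, lt_of_lt_of_le j.2 hk⟩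

/-- The leading `r × c` submatrix of `M`. -/
def subUL {a b : ℕ} (M : Matrix (Fin a) (Fin b) ℝ) (r c : ℕ) (hr : r ≤ a) (hc : c ≤ b) :
    Matrix (Fin r) (Fin c) ℝ :=
  M.submatrix (fun i => ⟨i.1, lt_of_lt_of_le i.2 hr⟩) (fun j => ⟨j.1, lt_of_lt_of_le j.2 hc⟩)

/-!
The singular values of `A = P B Qᵀ` are those of `B`, and the smallest singular value of a matrix
`M` with `k` columns is the minimum of `‖M x‖ / ‖x‖`, attained only at eigenvectors of `Mᵀ M`.
Padding with zeros realises `B_k` as the restriction of `B` to `ℝᵏ`, and deleting the last row of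
`B_k` gives `B̄_k`; hence the weak inequalities. Equality in `σ_n ≤ θ_k` or `θ̄_k ≤ θ_k` would
produce an eigenvector of `Bᵀ B`, respectively `B_kᵀ B_k`, whose last coordinate vanishes. No such
vector exists, since the matrix is tridiagonal with nonzero off-diagonal entries. For `θ_k < σ_k`
the trial space `ℝᵏ` is replaced by its image under `Bᵀ B`: one step of the power method increases
`‖B x‖ / ‖x‖` strictly unless `x` is an eigenvector, which is excluded in the same way.
-/

section SpectralNorm

open scoped Matrix.Norms.L2Operator

variable {a b c : ℕ}

lemma specNorm_eq_l2_opNorm (M : Matrix (Fin a) (Fin b) ℝ) : specNorm M = ‖M‖ := rfl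

lemma specNorm_nonneg (M : Matrix (Fin a) (Fin b) ℝ) : 0 ≤ specNorm M := norm_nonneg _

lemma norm_toEuclideanLin_le (M : Matrix (Fin a) (Fin b) ℝ) (x : EuclideanSpace ℝ (Fin b)) :
    ‖M.toEuclideanLin x‖ ≤ specNorm M * ‖x‖ :=
  (LinearMap.toContinuousLinearMap M.toEuclideanLin).le_opNorm x

lemma specNorm_le_of_forall {M : Matrix (Fin a) (Fin b) ℝ} {r : ℝ} (hr : 0 ≤ r)
    (h : ∀ x, ‖M.toEuclideanLin x‖ ≤ r * ‖x‖) : specNorm M ≤ r :=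
  ContinuousLinearMap.opNorm_le_bound _ hr h

lemma specNorm_toEuclideanLin_symm_rankOne (u : EuclideanSpace ℝ (Fin a))
    (v : EuclideanSpace ℝ (Fin b)) :
    specNorm (toEuclideanLin.symm (InnerProductSpace.rankOne ℝ u v).toLinearMap) = ‖u‖ * ‖v‖ := by
  rw [specNorm, LinearEquiv.apply_symm_apply]
  exact InnerProductSpace.norm_rankOne u v

lemma specNorm_mul_le (M : Matrix (Fin a) (Fin b) ℝ) (N : Matrix (Fin b) (Fin c) ℝ) :
    specNorm (M * N) ≤ specNorm M * specNorm N :=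
  l2_opNorm_mul M N

lemma specNorm_transpose (M : Matrix (Fin a) (Fin b) ℝ) : specNorm Mᵀ = specNorm M := by
  rw [specNorm_eq_l2_opNorm, ← conjTranspose_eq_transpose_of_trivial, l2_opNorm_conjTranspose,
    specNorm_eq_l2_opNorm]

end SpectralNorm

section Gram

open scoped RealInnerProductSpace

variable {m n : Type*} [Fintype m] [Fintype n] [DecidableEq n]

lemma inner_toEuclideanLin_transpose_mul_self (M : Matrix m n ℝ) (x y : EuclideanSpace ℝ n) :
    ⟪(Mᵀ * M).toEuclideanLin x, y⟫ = ⟪M.toEuclideanLin x, M.toEuclideanLin y⟫ := by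
  classical
  rw [← conjTranspose_eq_transpose_of_trivial, toLpLin_mul_same, LinearMap.comp_apply,
    toEuclideanLin_conjTranspose_eq_adjoint, LinearMap.adjoint_inner_left]

lemma norm_toEuclideanLin_of_transpose_mul_self_eq_one {U : Matrix m n ℝ} (hU : Uᵀ * U = 1)
    (x : EuclideanSpace ℝ n) : ‖U.toEuclideanLin x‖ = ‖x‖ := by
  rw [← sq_eq_sq₀ (norm_nonneg _) (norm_nonneg _), ← real_inner_self_eq_norm_sq,
    ← inner_toEuclideanLin_transpose_mul_self, hU, toLpLin_one, LinearMap.id_apply,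
    real_inner_self_eq_norm_sq]

lemma transpose_mul_self_eigenvector_of_norm_le {M : Matrix m n ℝ} {s : ℝ} (hs : 0 ≤ s)
    (h : ∀ x, s * ‖x‖ ≤ ‖M.toEuclideanLin x‖) {y : EuclideanSpace ℝ n}
    (hy : ‖M.toEuclideanLin y‖ ≤ s * ‖y‖) :
    (Mᵀ * M).toEuclideanLin y = s ^ 2 • y := by
  have hquad (x : EuclideanSpace ℝ n) : star x.ofLp ⬝ᵥ ((Mᵀ * M - s ^ 2 • 1) *ᵥ x.ofLp) =
      ‖M.toEuclideanLin x‖ ^ 2 - (s * ‖x‖) ^ 2 := by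
    have hgram : x.ofLp ⬝ᵥ ((Mᵀ * M) *ᵥ x.ofLp) = ‖M.toEuclideanLin x‖ ^ 2 := by
      rw [← real_inner_self_eq_norm_sq, ← inner_toEuclideanLin_transpose_mul_self]
      rfl
    have hself : x.ofLp ⬝ᵥ x.ofLp = ‖x‖ ^ 2 := by
      rw [← real_inner_self_eq_norm_sq]
      rfl
    rw [star_trivial, sub_mulVec, dotProduct_sub, smul_mulVec, one_mulVec, dotProduct_smul,
      smul_eq_mul, hgram, hself, mul_pow]
  have hherm : (Mᵀ * M - s ^ 2 • (1 : Matrix n n ℝ)).IsHermitian := by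
    simp [IsHermitian, conjTranspose_eq_transpose_of_trivial]
  have hpos : (Mᵀ * M - s ^ 2 • (1 : Matrix n n ℝ)).PosSemidef :=
    .of_dotProduct_mulVec_nonneg hherm fun x ↦ by
      rw [hquad (.toLp 2 x), sub_nonneg]
      exact pow_le_pow_left₀ (by positivity) (h _) 2
  have hzero := (hpos.dotProduct_mulVec_zero_iff y.ofLp).1 <| by
    rw [hquad, sub_eq_zero, le_antisymm hy (h y)]
  ext i
  simpa [sub_mulVec, smul_mulVec, sub_eq_zero] using congrFun hzero i

/-- One step of the power method does not decrease the Rayleigh quotient of `Mᵀ * M`, and leaves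
it unchanged only at an eigenvector. -/
lemma transpose_mul_self_eigenvector_of_norm_apply_le {M : Matrix m n ℝ} {s : ℝ} (hs : 0 ≤ s)
    {v : EuclideanSpace ℝ n} (hv : s * ‖v‖ ≤ ‖M.toEuclideanLin v‖)
    (hw : ‖M.toEuclideanLin ((Mᵀ * M).toEuclideanLin v)‖ ≤ s * ‖(Mᵀ * M).toEuclideanLin v‖) :
    (Mᵀ * M).toEuclideanLin v = s ^ 2 • v := by
  set w := (Mᵀ * M).toEuclideanLin v
  have hwv : ⟪w, v⟫ = ‖M.toEuclideanLin v‖ ^ 2 := by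
    rw [inner_toEuclideanLin_transpose_mul_self, real_inner_self_eq_norm_sq]
  have hww : ‖w‖ ≤ s * ‖M.toEuclideanLin v‖ := by
    rcases (norm_nonneg w).eq_or_lt with h0 | hpos
    · rw [← h0]; positivity
    refine le_of_mul_le_mul_right ?_ hpos
    calc ‖w‖ * ‖w‖ = ⟪M.toEuclideanLin v, M.toEuclideanLin w⟫ := by
          rw [← inner_toEuclideanLin_transpose_mul_self, real_inner_self_eq_norm_mul_norm]
      _ ≤ ‖M.toEuclideanLin v‖ * ‖M.toEuclideanLin w‖ := real_inner_le_norm _ _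
      _ ≤ ‖M.toEuclideanLin v‖ * (s * ‖w‖) := by gcongr
      _ = s * ‖M.toEuclideanLin v‖ * ‖w‖ := by ring
  rw [← sub_eq_zero, ← norm_eq_zero, ← sq_eq_zero_iff]
  refine le_antisymm ?_ (sq_nonneg _)
  calc ‖w - s ^ 2 • v‖ ^ 2
      = ‖w‖ ^ 2 - 2 * s ^ 2 * ‖M.toEuclideanLin v‖ ^ 2 + s ^ 2 * (s * ‖v‖) ^ 2 := by
        rw [norm_sub_sq_real, real_inner_smul_right, hwv, norm_smul,
          Real.norm_of_nonneg (sq_nonneg s)]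
        ring
    _ ≤ (s * ‖M.toEuclideanLin v‖) ^ 2 - 2 * s ^ 2 * ‖M.toEuclideanLin v‖ ^ 2
          + s ^ 2 * ‖M.toEuclideanLin v‖ ^ 2 := by gcongr
    _ = 0 := by ring

end Gram

lemma exists_norm_eq_one_forall_norm_le {E F : Type*} [NormedAddCommGroup E] [NormedSpace ℝ E]
    [FiniteDimensional ℝ E] [Nontrivial E] [SeminormedAddCommGroup F] [NormedSpace ℝ F]
    (T : E →ₗ[ℝ] F) : ∃ u, ‖u‖ = 1 ∧ ∀ v, ‖T u‖ * ‖v‖ ≤ ‖T v‖ := by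
  have : ProperSpace E := FiniteDimensional.proper_real E
  obtain ⟨u, hu, hmin⟩ := (isCompact_sphere (0 : E) 1).exists_isMinOn
    (NormedSpace.sphere_nonempty.2 zero_le_one)
    (LinearMap.continuous_of_finiteDimensional T).norm.continuousOn
  refine ⟨u, mem_sphere_zero_iff_norm.1 hu, fun v ↦ ?_⟩
  rcases eq_or_ne v 0 with rfl | hv
  · simp
  have hv1 : ‖v‖⁻¹ • v ∈ Metric.sphere (0 : E) 1 :=
    mem_sphere_zero_iff_norm.2 (norm_smul_inv_norm (𝕜 := ℝ) hv)
  have hle : ‖T u‖ ≤ ‖T (‖v‖⁻¹ • v)‖ := hmin hv1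
  rwa [map_smul, norm_smul, norm_inv, norm_norm, inv_mul_eq_div,
    le_div_iff₀ (norm_pos_iff.2 hv)] at hle

section SingularValues

variable {a b c d j : ℕ} {M : Matrix (Fin a) (Fin b) ℝ}

lemma singVal_nonneg (M : Matrix (Fin a) (Fin b) ℝ) (j : ℕ) : 0 ≤ singVal M j :=
  Real.sInf_nonneg fun _ ⟨_, _, hr⟩ ↦ hr ▸ specNorm_nonneg _

lemma singVal_le_specNorm_sub (M : Matrix (Fin a) (Fin b) ℝ) {D : Matrix (Fin a) (Fin b) ℝ}
    (hD : D.rank < j) : singVal M j ≤ specNorm (M - D) :=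
  csInf_le ⟨0, fun _ ⟨_, _, hr⟩ ↦ hr ▸ specNorm_nonneg _⟩ ⟨D, hD, rfl⟩

lemma le_singVal_of_forall {r : ℝ} (hj : 0 < j)
    (h : ∀ D : Matrix (Fin a) (Fin b) ℝ, D.rank < j → r ≤ specNorm (M - D)) : r ≤ singVal M j :=
  le_csInf ⟨_, 0, by rwa [rank_zero], rfl⟩ fun _ ⟨D, hD, hr⟩ ↦ hr ▸ h D hD

lemma singVal_mul_mul_le (M : Matrix (Fin a) (Fin b) ℝ) {U : Matrix (Fin c) (Fin a) ℝ}
    (hU : specNorm U ≤ 1) {V : Matrix (Fin b) (Fin d) ℝ} (hV : specNorm V ≤ 1) (hj : 0 < j) :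
    singVal (U * M * V) j ≤ singVal M j := by
  refine le_singVal_of_forall hj fun D hD ↦ ?_
  have hrank : (U * D * V).rank < j :=
    ((rank_mul_le_left _ _).trans (rank_mul_le_right _ _)).trans_lt hD
  calc singVal (U * M * V) j ≤ specNorm (U * M * V - U * D * V) := singVal_le_specNorm_sub _ hrank
    _ = specNorm (U * (M - D) * V) := by rw [Matrix.mul_sub, Matrix.sub_mul]
    _ ≤ specNorm U * specNorm (M - D) * specNorm V :=
        (specNorm_mul_le _ _).trans <|
          mul_le_mul_of_nonneg_right (specNorm_mul_le _ _) (specNorm_nonneg V)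
    _ ≤ specNorm U * specNorm (M - D) :=
        mul_le_of_le_one_right (mul_nonneg (specNorm_nonneg U) (specNorm_nonneg _)) hV
    _ ≤ specNorm (M - D) := mul_le_of_le_one_left (specNorm_nonneg _) hU

lemma specNorm_le_one_of_transpose_mul_self_eq_one {U : Matrix (Fin a) (Fin b) ℝ}
    (hU : Uᵀ * U = 1) : specNorm U ≤ 1 :=
  specNorm_le_of_forall zero_le_one fun x ↦ by
    rw [norm_toEuclideanLin_of_transpose_mul_self_eq_one hU, one_mul]

lemma singVal_mul_mul_transpose (M : Matrix (Fin a) (Fin b) ℝ) {P : Matrix (Fin c) (Fin a) ℝ}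
    (hP : Pᵀ * P = 1) {Q : Matrix (Fin d) (Fin b) ℝ} (hQ : Qᵀ * Q = 1) (hj : 0 < j) :
    singVal (P * M * Qᵀ) j = singVal M j := by
  have hP1 := specNorm_le_one_of_transpose_mul_self_eq_one hP
  have hQ1 := specNorm_le_one_of_transpose_mul_self_eq_one hQ
  have hM : Pᵀ * (P * M * Qᵀ) * Q = M := by
    simp only [Matrix.mul_assoc, hQ, Matrix.mul_one]
    rw [← Matrix.mul_assoc, hP, Matrix.one_mul]
  refine le_antisymm (singVal_mul_mul_le M hP1 (by rwa [specNorm_transpose]) hj) ?_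
  conv_lhs => rw [← hM]
  exact singVal_mul_mul_le _ (by rwa [specNorm_transpose]) hQ1 hj

lemma rank_eq_finrank_range_toEuclideanLin (D : Matrix (Fin a) (Fin b) ℝ) :
    D.rank = Module.finrank ℝ (LinearMap.range D.toEuclideanLin) := by
  rw [toEuclideanLin_eq_toLin_orthonormal]
  exact rank_eq_finrank_range_toLin D _ _

lemma exists_mem_toEuclideanLin_eq_zero {D : Matrix (Fin a) (Fin b) ℝ}
    {V : Submodule ℝ (EuclideanSpace ℝ (Fin b))} (h : D.rank < Module.finrank ℝ V) :
    ∃ v ∈ V, v ≠ 0 ∧ D.toEuclideanLin v = 0 := by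
  rw [rank_eq_finrank_range_toEuclideanLin] at h
  have hker := LinearMap.ker_ne_bot_of_finrank_lt
    (f := D.toEuclideanLin.rangeRestrict.domRestrict V) h
  obtain ⟨v, hv, hv0⟩ := Submodule.exists_mem_ne_zero_of_ne_bot hker
  exact ⟨v, v.2, by simpa using hv0, congrArg Subtype.val (LinearMap.mem_ker.1 hv)⟩

lemma le_singVal_of_le_finrank {V : Submodule ℝ (EuclideanSpace ℝ (Fin b))} (hj : 0 < j)
    (hV : j ≤ Module.finrank ℝ V) {r : ℝ} (h : ∀ v ∈ V, r * ‖v‖ ≤ ‖M.toEuclideanLin v‖) :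
    r ≤ singVal M j := by
  refine le_singVal_of_forall hj fun D hD ↦ ?_
  obtain ⟨v, hvV, hv0, hDv⟩ := exists_mem_toEuclideanLin_eq_zero (hD.trans_le hV)
  refine le_of_mul_le_mul_right ?_ (norm_pos_iff.2 hv0)
  calc r * ‖v‖ ≤ ‖M.toEuclideanLin v‖ := h v hvV
    _ = ‖(M - D).toEuclideanLin v‖ := by rw [map_sub, LinearMap.sub_apply, hDv, sub_zero]
    _ ≤ specNorm (M - D) * ‖v‖ := norm_toEuclideanLin_le _ _

lemma lt_singVal_of_le_finrank {V : Submodule ℝ (EuclideanSpace ℝ (Fin b))} (hj : 0 < j)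
    (hV : j ≤ Module.finrank ℝ V) {r : ℝ}
    (h : ∀ v ∈ V, v ≠ 0 → r * ‖v‖ < ‖M.toEuclideanLin v‖) : r < singVal M j := by
  have : Nontrivial V := Module.nontrivial_of_finrank_pos (hj.trans_le hV)
  obtain ⟨u, hu1, hmin⟩ := exists_norm_eq_one_forall_norm_le (M.toEuclideanLin.domRestrict V)
  have hu0 : (u : EuclideanSpace ℝ (Fin b)) ≠ 0 := by
    rw [← norm_ne_zero_iff, ← Submodule.coe_norm, hu1]
    exact one_ne_zero
  calc r = r * ‖(u : EuclideanSpace ℝ (Fin b))‖ := by rw [← Submodule.coe_norm, hu1, mul_one]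
    _ < ‖M.toEuclideanLin u‖ := h u u.2 hu0
    _ ≤ singVal M j := le_singVal_of_le_finrank hj hV fun v hv ↦ hmin ⟨v, hv⟩

lemma lt_singVal_of_forall_ne_zero {r : ℝ} (hb : 0 < b)
    (h : ∀ x, x ≠ 0 → r * ‖x‖ < ‖M.toEuclideanLin x‖) : r < singVal M b :=
  lt_singVal_of_le_finrank (V := ⊤) hb (by simp) fun x _ ↦ h x

lemma exists_norm_toEuclideanLin_le_singVal (M : Matrix (Fin a) (Fin b) ℝ) (hb : 0 < b) :
    ∃ y, y ≠ 0 ∧ ‖M.toEuclideanLin y‖ ≤ singVal M b * ‖y‖ := by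
  by_contra! h
  exact lt_irrefl _ (lt_singVal_of_forall_ne_zero hb h)

lemma rank_lt_of_toEuclideanLin_eq_zero {D : Matrix (Fin a) (Fin b) ℝ}
    {x : EuclideanSpace ℝ (Fin b)} (hx : x ≠ 0) (hDx : D.toEuclideanLin x = 0) : D.rank < b := by
  have hker : 0 < Module.finrank ℝ (LinearMap.ker D.toEuclideanLin) :=
    Module.finrank_pos_iff_exists_ne_zero.2 ⟨⟨x, hDx⟩, by simpa [Subtype.ext_iff] using hx⟩
  have hdim := D.toEuclideanLin.finrank_range_add_finrank_ker
  rw [finrank_euclideanSpace_fin, ← rank_eq_finrank_range_toEuclideanLin] at hdim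
  omega

lemma singVal_mul_norm_le (M : Matrix (Fin a) (Fin b) ℝ) (x : EuclideanSpace ℝ (Fin b)) :
    singVal M b * ‖x‖ ≤ ‖M.toEuclideanLin x‖ := by
  rcases eq_or_ne x 0 with rfl | hx
  · simp
  have hx0 : ‖x‖ ≠ 0 := norm_ne_zero_iff.2 hx
  set R := toEuclideanLin.symm
    (InnerProductSpace.rankOne ℝ (M.toEuclideanLin x) ((‖x‖ ^ 2)⁻¹ • x)).toLinearMap with hR
  have hker : (M - R).toEuclideanLin x = 0 := by
    rw [map_sub, hR, LinearEquiv.apply_symm_apply, LinearMap.sub_apply,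
      ContinuousLinearMap.coe_coe, InnerProductSpace.rankOne_apply, real_inner_smul_left,
      real_inner_self_eq_norm_sq, inv_mul_cancel₀ (pow_ne_zero 2 hx0), one_smul, sub_self]
  have hnorm : specNorm R = ‖M.toEuclideanLin x‖ / ‖x‖ := by
    rw [specNorm_toEuclideanLin_symm_rankOne, norm_smul, norm_inv, norm_pow, norm_norm]
    field_simp
  have hle := singVal_le_specNorm_sub M (rank_lt_of_toEuclideanLin_eq_zero hx hker)
  rwa [sub_sub_cancel, hnorm, le_div_iff₀ (norm_pos_iff.2 hx)] at hle

end SingularValues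

section ZeroPad

variable {a b k : ℕ}

/-- The `b × k` matrix whose columns are the first `k` standard basis vectors of `ℝᵇ`; applying it
pads a vector of `ℝᵏ` with zeros. -/
def zeroPad (hk : k ≤ b) : Matrix (Fin b) (Fin k) ℝ := colSub 1 k hk

lemma zeroPad_apply (hk : k ≤ b) (i : Fin b) (j : Fin k) :
    zeroPad hk i j = if i = Fin.castLE hk j then 1 else 0 :=
  one_apply

lemma transpose_zeroPad_mul_self (hk : k ≤ b) : (zeroPad hk)ᵀ * zeroPad hk = 1 := by
  have hmul : (zeroPad hk)ᵀ * zeroPad hk =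
      (1ᵀ * (1 : Matrix (Fin b) (Fin b) ℝ)).submatrix (Fin.castLE hk) (Fin.castLE hk) := rfl
  rw [hmul, transpose_one, Matrix.mul_one, submatrix_one _ (Fin.castLE_injective hk)]

lemma mul_zeroPad (B : Matrix (Fin a) (Fin b) ℝ) (hk : k ≤ b) :
    B * zeroPad hk = colSub B k hk := by
  have hmul : B * zeroPad hk =
      (B * (1 : Matrix (Fin b) (Fin b) ℝ)).submatrix id (Fin.castLE hk) := rfl
  rw [hmul, Matrix.mul_one]
  rfl

lemma norm_toEuclideanLin_zeroPad (hk : k ≤ b) (y : EuclideanSpace ℝ (Fin k)) :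
    ‖(zeroPad hk).toEuclideanLin y‖ = ‖y‖ :=
  norm_toEuclideanLin_of_transpose_mul_self_eq_one (transpose_zeroPad_mul_self hk) y

lemma toEuclideanLin_zeroPad_apply_of_le (hk : k ≤ b) (y : EuclideanSpace ℝ (Fin k))
    {j : Fin b} (hj : k ≤ j) : (zeroPad hk).toEuclideanLin y j = 0 := by
  change ∑ i, zeroPad hk j i * y i = 0
  refine Finset.sum_eq_zero fun i _ ↦ ?_
  rw [zeroPad_apply, if_neg fun h ↦ (i.2.trans_le hj).ne (congrArg Fin.val h).symm, zero_mul]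

end ZeroPad

lemma norm_sq_toEuclideanLin_eq_subUL_add {a b : ℕ} (C : Matrix (Fin (a + 1)) (Fin b) ℝ)
    (y : EuclideanSpace ℝ (Fin b)) : ‖C.toEuclideanLin y‖ ^ 2 =
      ‖(subUL C a b a.le_succ le_rfl).toEuclideanLin y‖ ^ 2 +
        C.toEuclideanLin y (Fin.last a) ^ 2 := by
  rw [EuclideanSpace.real_norm_sq_eq, EuclideanSpace.real_norm_sq_eq, Fin.sum_univ_castSucc]
  rfl

section Bidiagonal

variable {a b k : ℕ} {B : Matrix (Fin a) (Fin b) ℝ}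

/-- Lower bidiagonal matrices of arbitrary shape whose diagonal and subdiagonal entries are all
nonzero: the shape produced by the Golub–Kahan process before it breaks down. -/
structure IsUnreducedLowerBidiagonal (B : Matrix (Fin a) (Fin b) ℝ) : Prop where
  diag_ne_zero {i : Fin a} {j : Fin b} : (i : ℕ) = j → B i j ≠ 0
  subdiag_ne_zero {i : Fin a} {j : Fin b} : (i : ℕ) = j + 1 → B i j ≠ 0
  eq_zero {i : Fin a} {j : Fin b} : (i : ℕ) ≠ j → (i : ℕ) ≠ j + 1 → B i j = 0

namespace IsUnreducedLowerBidiagonal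

lemma leading_submatrix (hB : IsUnreducedLowerBidiagonal B) {r c : ℕ} (hr : r ≤ a) (hc : c ≤ b) :
    IsUnreducedLowerBidiagonal (subUL B r c hr hc) where
  diag_ne_zero h := hB.diag_ne_zero h
  subdiag_ne_zero h := hB.subdiag_ne_zero h
  eq_zero h h' := hB.eq_zero h h'

lemma mulVec_apply_of_lt (hB : IsUnreducedLowerBidiagonal B) {x : Fin b → ℝ} {l : Fin b}
    (hx : ∀ j, l < j → x j = 0) {i : Fin a} (hi : (l : ℕ) < i) :
    (B *ᵥ x) i = B i l * x l := by
  refine Finset.sum_eq_single_of_mem l (Finset.mem_univ l) fun j _ hjl ↦ ?_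
  change B i j * x j = 0
  rcases lt_or_gt_of_ne hjl with hj | hj
  · rw [hB.eq_zero (by omega) (by omega), zero_mul]
  · rw [hx j hj, mul_zero]

lemma transpose_mulVec_apply (hB : IsUnreducedLowerBidiagonal B) {z : Fin a → ℝ} {i : Fin a}
    (hz : ∀ i', i < i' → z i' = 0) {j : Fin b} (hij : (i : ℕ) = j) :
    (Bᵀ *ᵥ z) j = B i j * z i := by
  refine Finset.sum_eq_single_of_mem i (Finset.mem_univ i) fun i' _ hi' ↦ ?_
  change B i' j * z i' = 0
  rcases lt_or_gt_of_ne hi' with hlt | hgt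
  · rw [hB.eq_zero (by omega) (by omega), zero_mul]
  · rw [hz i' hgt, mul_zero]

/-- If `l` is the last index of the support of `x`, row `l + 1` of the eigenvalue equation reads
`B (l+1) (l+1) * B (l+1) l * x l = 0`. -/
lemma eq_zero_of_transpose_mul_self_eigenvector (hB : IsUnreducedLowerBidiagonal B) {p : ℕ}
    (hpa : p < a) (hpb : p < b) {x : EuclideanSpace ℝ (Fin b)} {s : ℝ}
    (heig : (Bᵀ * B).toEuclideanLin x = s • x) (hx : ∀ j : Fin b, p ≤ j → x j = 0) : x = 0 := by
  by_contra hx0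
  have hne : {j | x j ≠ 0}.Nonempty := by
    by_contra! h
    exact hx0 (PiLp.ext fun j ↦ not_not.1 (Set.eq_empty_iff_forall_notMem.1 h j))
  obtain ⟨l, hl, hmax⟩ := wellFounded_gt.has_min {j | x j ≠ 0} hne
  have hlast (j : Fin b) (hj : l < j) : x j = 0 := not_not.1 fun h ↦ hmax j h hj
  have hlp : (l : ℕ) < p := not_le.1 fun h ↦ hl (hx l h)
  set i : Fin a := ⟨l + 1, by omega⟩
  set j : Fin b := ⟨l + 1, by omega⟩
  have hBx : (B *ᵥ x.ofLp) i = B i l * x l := hB.mulVec_apply_of_lt hlast (Nat.lt_succ_self l)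
  have hBx0 (i' : Fin a) (hi' : i < i') : (B *ᵥ x.ofLp) i' = 0 := by
    have hlt : (l : ℕ) + 1 < i' := hi'
    rw [hB.mulVec_apply_of_lt hlast (by omega), hB.eq_zero (by omega) (by omega), zero_mul]
  have hrow : B i j * (B i l * x l) = 0 := by
    rw [← hBx, ← hB.transpose_mulVec_apply hBx0 rfl, mulVec_mulVec]
    have heig_j := congrFun (congrArg WithLp.ofLp heig) j
    simpa [hlast j (Nat.lt_succ_self l)] using heig_j
  exact mul_ne_zero (hB.diag_ne_zero rfl) (mul_ne_zero (hB.subdiag_ne_zero rfl) hl) hrow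

lemma eq_zero_of_toEuclideanLin_eq_zero {B : Matrix (Fin k) (Fin k) ℝ}
    (hB : IsUnreducedLowerBidiagonal B) {x : EuclideanSpace ℝ (Fin k)}
    (hx : B.toEuclideanLin x = 0) : x = 0 := by
  have hdet : B.det ≠ 0 := by
    have htri : B.IsLowerTriangular := fun i j (hij : i < j) ↦
      hB.eq_zero (by omega) (by omega)
    rw [det_of_isLowerTriangular B htri]
    exact Finset.prod_ne_zero_iff.2 fun i _ ↦ hB.diag_ne_zero rfl
  exact (WithLp.ofLp_eq_zero 2).1 <|
    eq_zero_of_mulVec_eq_zero hdet (congrArg WithLp.ofLp hx)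

/-- The Golub–Kahan relation `A Q_k = P_{k+1} B_k` for `A = B`, whose Lanczos vectors are the
standard basis vectors. -/
lemma mul_zeroPad_eq_zeroPad_mul_subUL (hB : IsUnreducedLowerBidiagonal B) (hka : k + 1 ≤ a)
    (hkb : k ≤ b) : B * zeroPad hkb = zeroPad hka * subUL B (k + 1) k hka hkb := by
  ext i j
  rw [mul_zeroPad, mul_apply]
  simp only [zeroPad_apply, ite_mul, one_mul, zero_mul]
  by_cases hi : (i : ℕ) < k + 1
  · obtain ⟨l, rfl⟩ : ∃ l, Fin.castLE hka l = i := ⟨⟨i, hi⟩, rfl⟩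
    rw [Finset.sum_eq_single_of_mem l (Finset.mem_univ l) fun l' _ hl' ↦
      if_neg fun h ↦ hl' (Fin.castLE_injective hka h).symm]
    exact (if_pos rfl).symm
  · rw [Finset.sum_eq_zero fun l _ ↦ if_neg fun h : i = Fin.castLE hka l ↦ hi (h ▸ l.2)]
    exact hB.eq_zero (j := Fin.castLE hkb j) (by grind) (by grind)

lemma norm_toEuclideanLin_subUL (hB : IsUnreducedLowerBidiagonal B) (hka : k + 1 ≤ a)
    (hkb : k ≤ b) (y : EuclideanSpace ℝ (Fin k)) :
    ‖(subUL B (k + 1) k hka hkb).toEuclideanLin y‖ =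
      ‖B.toEuclideanLin ((zeroPad hkb).toEuclideanLin y)‖ := by
  rw [← norm_toEuclideanLin_zeroPad hka, ← LinearMap.comp_apply, ← toLpLin_mul_same,
    ← hB.mul_zeroPad_eq_zeroPad_mul_subUL hka hkb, toLpLin_mul_same, LinearMap.comp_apply]

lemma eq_zero_of_transpose_mul_self_zeroPad (hB : IsUnreducedLowerBidiagonal B) (hka : k < a)
    (hkb : k < b) {y : EuclideanSpace ℝ (Fin k)} {s : ℝ}
    (heig : (Bᵀ * B).toEuclideanLin ((zeroPad hkb.le).toEuclideanLin y) =
      s • (zeroPad hkb.le).toEuclideanLin y) : y = 0 := by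
  have hpad := hB.eq_zero_of_transpose_mul_self_eigenvector hka hkb heig
    fun j ↦ toEuclideanLin_zeroPad_apply_of_le hkb.le y
  rw [← norm_eq_zero, ← norm_toEuclideanLin_zeroPad hkb.le, hpad, norm_zero]

theorem singVal_lt_singVal_subUL (hB : IsUnreducedLowerBidiagonal B) (hk : 0 < k) (hka : k < a)
    (hkb : k < b) : singVal B b < singVal (subUL B (k + 1) k hka hkb.le) k := by
  by_contra! hle
  obtain ⟨y, hy0, hy⟩ :=
    exists_norm_toEuclideanLin_le_singVal (subUL B (k + 1) k hka hkb.le) hk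
  rw [hB.norm_toEuclideanLin_subUL, ← norm_toEuclideanLin_zeroPad hkb.le] at hy
  have heig := transpose_mul_self_eigenvector_of_norm_le (singVal_nonneg B b)
    (singVal_mul_norm_le B) (hy.trans (mul_le_mul_of_nonneg_right hle (norm_nonneg _)))
  exact hy0 (hB.eq_zero_of_transpose_mul_self_zeroPad hka hkb heig)

/-- The `k`-dimensional trial space for `σ_k` is `Bᵀ * B` applied to the padded vectors of `B_k`,
on which the power step improves the bound `θ_k` strictly. -/
theorem singVal_subUL_lt_singVal (hB : IsUnreducedLowerBidiagonal B) (hk : 0 < k) (hka : k < a)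
    (hkb : k < b) : singVal (subUL B (k + 1) k hka hkb.le) k < singVal B k := by
  set θ := singVal (subUL B (k + 1) k hka hkb.le) k
  set E := (zeroPad hkb.le).toEuclideanLin
  set T := (Bᵀ * B).toEuclideanLin ∘ₗ E
  have hT : Function.Injective T := (injective_iff_map_eq_zero T).2 fun y hy ↦
    hB.eq_zero_of_transpose_mul_self_zeroPad hka hkb (s := 0) (hy.trans (zero_smul ℝ _).symm)
  have hdim : k ≤ Module.finrank ℝ (LinearMap.range T) := by
    rw [LinearMap.finrank_range_of_inj hT, finrank_euclideanSpace_fin]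
  refine lt_singVal_of_le_finrank hk hdim ?_
  rintro _ ⟨y, rfl⟩ hTy
  by_contra! hle
  have hEy : θ * ‖E y‖ ≤ ‖B.toEuclideanLin (E y)‖ := by
    rw [norm_toEuclideanLin_zeroPad, ← hB.norm_toEuclideanLin_subUL hka]
    exact singVal_mul_norm_le _ y
  have heig := transpose_mul_self_eigenvector_of_norm_apply_le (singVal_nonneg _ _) hEy hle
  rw [hB.eq_zero_of_transpose_mul_self_zeroPad hka hkb heig, map_zero] at hTy
  exact hTy rfl

theorem singVal_pos {B : Matrix (Fin k) (Fin k) ℝ} (hB : IsUnreducedLowerBidiagonal B)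
    (hk : 0 < k) : 0 < singVal B k :=
  lt_singVal_of_forall_ne_zero hk fun x hx ↦ by
    rw [zero_mul, norm_pos_iff]
    exact mt hB.eq_zero_of_toEuclideanLin_eq_zero hx

theorem singVal_subUL_self_lt_singVal {C : Matrix (Fin (k + 1)) (Fin k) ℝ}
    (hC : IsUnreducedLowerBidiagonal C) (hk : 0 < k) :
    singVal (subUL C k k k.le_succ le_rfl) k < singVal C k := by
  by_contra! hle
  obtain ⟨y, hy0, hy⟩ := exists_norm_toEuclideanLin_le_singVal C hk
  have hnorm : ‖C.toEuclideanLin y‖ ≤ ‖(subUL C k k k.le_succ le_rfl).toEuclideanLin y‖ :=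
    calc ‖C.toEuclideanLin y‖ ≤ singVal (subUL C k k k.le_succ le_rfl) k * ‖y‖ :=
          hy.trans (mul_le_mul_of_nonneg_right hle (norm_nonneg y))
      _ ≤ _ := singVal_mul_norm_le _ y
  have hlast : C.toEuclideanLin y (Fin.last k) = 0 := by
    have hsq := pow_le_pow_left₀ (norm_nonneg _) hnorm 2
    rw [norm_sq_toEuclideanLin_eq_subUL_add, add_le_iff_nonpos_right] at hsq
    exact sq_eq_zero_iff.1 (hsq.antisymm (sq_nonneg _))
  set p : Fin k := ⟨k - 1, by omega⟩
  have hp : (p : ℕ) + 1 = k := by grind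
  have hyp : y p = 0 := by
    have hCy : C.toEuclideanLin y (Fin.last k) = C (Fin.last k) p * y p :=
      hC.mulVec_apply_of_lt (fun j hj ↦ by omega) p.2
    exact (mul_eq_zero.1 (hCy.symm.trans hlast)).resolve_left (hC.subdiag_ne_zero hp.symm)
  have heig := transpose_mul_self_eigenvector_of_norm_le (singVal_nonneg C k)
    (singVal_mul_norm_le C) hy
  refine hy0 (hC.eq_zero_of_transpose_mul_self_eigenvector (by omega) p.2 heig fun j hj ↦ ?_)
  rwa [show j = p by omega]

end IsUnreducedLowerBidiagonal

end Bidiagonal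

theorem smallest_singularValues_Bk_Bbark_bounds_rectangular_general {m l a n k : ℕ}
    {P : Matrix (Fin m) (Fin a) ℝ} (hP : Pᵀ * P = 1) {Q : Matrix (Fin l) (Fin n) ℝ}
    (hQ : Qᵀ * Q = 1) {B : Matrix (Fin a) (Fin n) ℝ} (hB : IsUnreducedLowerBidiagonal B)
    (hk : 0 < k) (hka : k < a) (hkn : k < n) :
    singVal (P * B * Qᵀ) n < singVal (subUL B (k + 1) k hka hkn.le) k ∧
    singVal (subUL B (k + 1) k hka hkn.le) k < singVal (P * B * Qᵀ) k ∧
    0 < singVal (subUL B k k hka.le hkn.le) k ∧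
    singVal (subUL B k k hka.le hkn.le) k < singVal (subUL B (k + 1) k hka hkn.le) k := by
  rw [singVal_mul_mul_transpose B hP hQ hk, singVal_mul_mul_transpose B hP hQ (hk.trans hkn)]
  exact ⟨hB.singVal_lt_singVal_subUL hk hka hkn, hB.singVal_subUL_lt_singVal hk hka hkn,
    (hB.leading_submatrix _ _).singVal_pos hk,
    (hB.leading_submatrix hka hkn.le).singVal_subUL_self_lt_singVal hk⟩

/-- in the rectangular case `m > n`, the smallest singular values satisfy
`σ_n < θ_k^{(k)} < σ_k` and `0 < θ̄_k^{(k)} < θ_k^{(k)} < σ_k` for `1 ≤ k ≤ n-1`. -/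
theorem smallest_singularValues_Bk_Bbark_bounds_rectangular
    (m n : ℕ) (hn : 2 ≤ n) (hmn : n < m)
    (A : Matrix (Fin m) (Fin n) ℝ)
    (P : Matrix (Fin m) (Fin (n + 1)) ℝ) (hP : Pᵀ * P = 1)
    (Q : Matrix (Fin n) (Fin n) ℝ) (hQ : Qᵀ * Q = 1)
    (α : Fin n → ℝ) (hα : ∀ i, 0 < α i)
    (β : Fin n → ℝ) (hβ : ∀ i, 0 < β i)
    (B : Matrix (Fin (n + 1)) (Fin n) ℝ)
    (hB : ∀ (i : Fin (n + 1)) (j : Fin n),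
      B i j = if (i : ℕ) = (j : ℕ) then α j
        else if (i : ℕ) = (j : ℕ) + 1 then β j else 0)
    (hA : A = P * B * Qᵀ)
    (σ : Fin n → ℝ) (hσpos : ∀ i, 0 < σ i)
    (hσstrict : ∀ i j : Fin n, i < j → σ j < σ i)
    (hσ : ∀ i : Fin n, σ i = singVal A ((i : ℕ) + 1))
    (k : ℕ) (hk1 : 1 ≤ k) (hk2 : k ≤ n - 1) :
    σ ⟨n - 1, by omega⟩ < singVal (subUL B (k + 1) k (by omega) (by omega)) k ∧
    singVal (subUL B (k + 1) k (by omega) (by omega)) k < σ ⟨k - 1, by omega⟩ ∧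
    0 < singVal (subUL B k k (by omega) (by omega)) k ∧
    singVal (subUL B k k (by omega) (by omega)) k <
      singVal (subUL B (k + 1) k (by omega) (by omega)) k := by
  have hB' : IsUnreducedLowerBidiagonal B :=
    { diag_ne_zero := fun h ↦ by rw [hB, if_pos h]; exact (hα _).ne'
      subdiag_ne_zero := fun h ↦ by rw [hB, if_neg (by omega), if_pos h]; exact (hβ _).ne'
      eq_zero := fun h h' ↦ by rw [hB, if_neg h, if_neg h'] }
  subst hA
  rw [hσ, hσ, Nat.sub_add_cancel hk1, Nat.sub_add_cancel (one_le_two.trans hn)]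
  exact smallest_singularValues_Bk_Bbark_bounds_rectangular_general hP hQ hB' hk1 (by omega)
    (by omega)
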